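/- arXiv:1305.0868 — 2 statements merged into one kernel-verified Lean document; each statement's English description precedes it below -/
import Mathlib

section
/- Let F be a field and let f(z), g(z) ∈ F[z] be nonzero polynomials with gcd(f, g) = 1, and let s(y), t(y) ∈ F[y] be nonzero polynomials with gcd(s, t) = 1. Let d = max(deg f, deg g), and define α(y) = f(s(y)/t(y))·t(y)^d and β(y) = g(s(y)/t(y))·t(y)^d (both elements of F[y]). Then gcd(α(y), β(y)) = 1. -/
open Polynomial

/-!
Let `α`, `β` be the values at `(s, t)` of the degree `d` homogenizations of `f`, `g`.
Homogenizing a Bézout relation `p * f + q * g = 1` shows that the ideal `(α, β)` contains a power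
of `t`. Modulo `t`, `α` and `β` reduce to `f_d * s ^ d` and `g_d * s ^ d`, with `f_d`, `g_d` the
coefficients in degree `d`. Over a field these are coprime because one of them is a leading
coefficient, so `(α, β)` also contains an element congruent to `s ^ d` modulo `t`, and this is
coprime to every power of `t`.
-/

theorem isCoprime_of_isCoprime_linear_combinations {A : Type*} [CommSemiring A]
    {x y u v p q : A} (h : IsCoprime (u * x + v * y) (p * x + q * y)) : IsCoprime x y := by
  obtain ⟨k, l, hkl⟩ := h
  refine ⟨k * u + l * p, k * v + l * q, ?_⟩
  rw [← hkl]
  ring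

theorem coeff_max_natDegree_ne_zero_or_ne_zero {R : Type*} [Semiring R] {f g : R[X]}
    (h : f ≠ 0 ∨ g ≠ 0) :
    f.coeff (max f.natDegree g.natDegree) ≠ 0 ∨ g.coeff (max f.natDegree g.natDegree) ≠ 0 := by
  rcases lt_trichotomy f.natDegree g.natDegree with hlt | heq | hgt
  · right
    rw [max_eq_right hlt.le]
    exact leadingCoeff_ne_zero.mpr (ne_zero_of_natDegree_gt hlt)
  · exact h.imp (fun hf ↦ by rwa [← heq, max_self, coeff_natDegree, leadingCoeff_ne_zero])
      (fun hg ↦ by rwa [heq, max_self, coeff_natDegree, leadingCoeff_ne_zero])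
  · left
    rw [max_eq_left hgt.le]
    exact leadingCoeff_ne_zero.mpr (ne_zero_of_natDegree_gt hgt)

section Homogenize

variable {R A : Type*} [CommSemiring R] [CommSemiring A] [Algebra R A] {f g : R[X]} {d : ℕ}

theorem aeval_homogenize_eq_sum_range (f : R[X]) (d : ℕ) (a b : A) :
    MvPolynomial.aeval ![a, b] (f.homogenize d) =
      ∑ i ∈ Finset.range (d + 1), algebraMap R A (f.coeff i) * a ^ i * b ^ (d - i) := by
  rw [homogenize, map_sum, Finset.Nat.sum_antidiagonal_eq_sum_range_succ_mk]
  refine Finset.sum_congr rfl fun i _ ↦ ?_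
  simp [MvPolynomial.aeval_monomial, Finsupp.prod_fintype, mul_assoc]

theorem exists_aeval_homogenize_eq_coeff_mul_pow_add_mul (f : R[X]) (d : ℕ) (a b : A) :
    ∃ c, MvPolynomial.aeval ![a, b] (f.homogenize d) =
      algebraMap R A (f.coeff d) * a ^ d + b * c := by
  have hdvd : b ∣ ∑ i ∈ Finset.range d, algebraMap R A (f.coeff i) * a ^ i * b ^ (d - i) :=
    Finset.dvd_sum fun i hi ↦
      (dvd_pow_self b (Nat.sub_ne_zero_of_lt (Finset.mem_range.mp hi))).mul_left _
  obtain ⟨c, hc⟩ := hdvd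
  refine ⟨c, ?_⟩
  rw [aeval_homogenize_eq_sum_range, Finset.sum_range_succ, hc, Nat.sub_self, pow_zero, mul_one,
    add_comm]

theorem exists_linear_combination_aeval_homogenize_eq_pow (hfd : f.natDegree ≤ d)
    (hgd : g.natDegree ≤ d) (hfg : IsCoprime f g) (a b : A) :
    ∃ (n : ℕ) (u v : A), u * MvPolynomial.aeval ![a, b] (f.homogenize d) +
      v * MvPolynomial.aeval ![a, b] (g.homogenize d) = b ^ n := by
  obtain ⟨p, q, hpq⟩ := hfg
  let e := max p.natDegree q.natDegree
  have hhom : p.homogenize e * f.homogenize d + q.homogenize e * g.homogenize d =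
      MvPolynomial.X 1 ^ (e + d) := by
    rw [← homogenize_mul p f (le_max_left _ _) hfd, ← homogenize_mul q g (le_max_right _ _) hgd,
      ← homogenize_add, hpq, homogenize_one]
  refine ⟨e + d, MvPolynomial.aeval ![a, b] (p.homogenize e),
    MvPolynomial.aeval ![a, b] (q.homogenize e), ?_⟩
  simpa using congrArg (MvPolynomial.aeval ![a, b]) hhom

theorem exists_linear_combination_aeval_homogenize_eq_pow_add_mul
    (hcoeff : IsCoprime (f.coeff d) (g.coeff d)) (a b : A) :
    ∃ u v c : A, u * MvPolynomial.aeval ![a, b] (f.homogenize d) +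
      v * MvPolynomial.aeval ![a, b] (g.homogenize d) = a ^ d + b * c := by
  obtain ⟨u, v, huv⟩ := hcoeff.map (algebraMap R A)
  obtain ⟨x, hx⟩ := exists_aeval_homogenize_eq_coeff_mul_pow_add_mul f d a b
  obtain ⟨y, hy⟩ := exists_aeval_homogenize_eq_coeff_mul_pow_add_mul g d a b
  refine ⟨u, v, u * x + v * y, ?_⟩
  calc
    _ = (u * algebraMap R A (f.coeff d) + v * algebraMap R A (g.coeff d)) * a ^ d +
        b * (u * x + v * y) := by rw [hx, hy]; ring
    _ = a ^ d + b * (u * x + v * y) := by rw [huv, one_mul]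

end Homogenize

theorem gcd_preserved_under_rational_substitution_general
    {R A : Type*} [CommSemiring R] [CommRing A] [Algebra R A] {f g : R[X]} {a b : A} {d : ℕ}
    (hfd : f.natDegree ≤ d) (hgd : g.natDegree ≤ d)
    (hcoeff : IsCoprime (f.coeff d) (g.coeff d))
    (hfg : IsCoprime f g) (hab : IsCoprime a b) :
    IsCoprime
      (∑ i ∈ Finset.range (d + 1), algebraMap R A (f.coeff i) * a ^ i * b ^ (d - i))
      (∑ i ∈ Finset.range (d + 1), algebraMap R A (g.coeff i) * a ^ i * b ^ (d - i)) := by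
  simp only [← aeval_homogenize_eq_sum_range]
  obtain ⟨n, u, v, hpow⟩ := exists_linear_combination_aeval_homogenize_eq_pow hfd hgd hfg a b
  obtain ⟨p, q, c, hlead⟩ :=
    exists_linear_combination_aeval_homogenize_eq_pow_add_mul hcoeff a b
  have hcop : IsCoprime (b ^ n) (a ^ d + b * c) :=
    (hab.symm.pow_right.add_mul_left_right c).pow_left
  rw [← hpow, ← hlead] at hcop
  exact isCoprime_of_isCoprime_linear_combinations hcop

/-- If `f, g ∈ F[z]` are nonzero and coprime, and `s, t ∈ F[y]` are nonzero and
coprime, then with `d = max (deg f) (deg g)`, the polynomials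
`α = f(s/t)·t^d` and `β = g(s/t)·t^d` are coprime. -/
theorem gcd_preserved_under_rational_substitution
    {F : Type*} [Field F] (f g s t : Polynomial F)
    (hf : f ≠ 0) (hg : g ≠ 0) (hs : s ≠ 0) (ht : t ≠ 0)
    (hfg : IsCoprime f g) (hst : IsCoprime s t) :
    IsCoprime
      (∑ i ∈ Finset.range (max f.natDegree g.natDegree + 1),
        Polynomial.C (f.coeff i) * s ^ i * t ^ (max f.natDegree g.natDegree - i))
      (∑ i ∈ Finset.range (max f.natDegree g.natDegree + 1),
        Polynomial.C (g.coeff i) * s ^ i * t ^ (max f.natDegree g.natDegree - i)) :=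
  gcd_preserved_under_rational_substitution_general (le_max_left _ _) (le_max_right _ _)
    (Semifield.isCoprime_iff.mpr (coeff_max_natDegree_ne_zero_or_ne_zero (.inl hf))) hfg hst
end

section
/- Let G be a finite DAG, e and e' edges with e' reachable from e, and let e = e₁, e₂, …, e_k = e' be the bottlenecks between e and e' listed in topological order (a bottleneck is an edge whose removal destroys every directed path from e to e'). Then the transfer polynomial factors as m_{ee'}(x) = Π_{i=1}^{k-1} m_{e_i e_{i+1}}(x), and each factor m_{e_i e_{i+1}}(x) is an irreducible polynomial. -/
/-- Adjacency of edges in a network: edge `e'` can follow edge `e` in a path when the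
destination node of `e` is the source node of `e'`. -/
def EdgeAdj {V E : Type*} (src dst : E → V) (e e' : E) : Prop := dst e = src e'

/-- `l` is a directed path (a nonempty sequence of consecutively adjacent edges) from
edge `a` to edge `b`. -/
def IsEdgePath {V E : Type*} (src dst : E → V) (a b : E) (l : List E) : Prop :=
  l.Chain' (EdgeAdj src dst) ∧ l.head? = some a ∧ l.getLast? = some b

/-- The monomial `t_P(x)` of a path `P = (e₁,…,e_k)`: the product of the coding variables
`x_{eᵢeᵢ₊₁}` along the path. -/
noncomputable def pathMonomial {E : Type*} (F : Type*) [Field F] (l : List E) :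
    MvPolynomial (E × E) F :=
  ((l.zip l.tail).map fun p => (MvPolynomial.X p : MvPolynomial (E × E) F)).prod

/-- The transfer polynomial `m_{ab}(x) = Σ_{P ∈ P_{ab}} t_P(x)`, where `Paths a b` is the
(finite) set of directed paths from `a` to `b`. -/
noncomputable def transferPoly {E : Type*} (F : Type*) [Field F]
    (Paths : E → E → Finset (List E)) (a b : E) : MvPolynomial (E × E) F :=
  ∑ l ∈ Paths a b, pathMonomial F l

/-!
Cutting the paths from `e` to `e'` at a bottleneck is a bijection onto pairs of paths, so the
transfer polynomial is multiplicative across bottlenecks.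

For irreducibility, the polynomial of a family of simple paths is multi-affine, so the two factors
of a factorization use disjoint sets of variables. This colours the arcs with two colours, and the
arcs of one colour on a path can be combined with the arcs of the other colour on any other path.
Hence all arcs leaving a given vertex have the same colour, and the colour cannot change at a vertex
which some path avoids. If only the endpoints are bottlenecks, all arcs have one colour and the
other factor is constant.
-/

section MultiaffinePolynomials

open MvPolynomial

variable {σ R : Type*} [CommSemiring R]

theorem coeff_mul_of_vars_subset {p q : MvPolynomial σ R} {U : Set σ} [DecidablePred (· ∈ U)]
    (hp : ↑p.vars ⊆ U) (hq : Disjoint ↑q.vars U) (d : σ →₀ ℕ) :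
    coeff d (p * q) = coeff (d.filter (· ∈ U)) p * coeff (d.filter (· ∉ U)) q := by
  classical
  rw [coeff_mul, Finset.sum_eq_single (d.filter (· ∈ U), d.filter (· ∉ U))]
  · rintro ⟨m, n⟩ hmn hne
    by_contra hcoeff
    have hm : ∀ v, m v ≠ 0 → v ∈ U := fun v hv => hp <| (mem_vars_iff_mem_support v).2
      ⟨m, mem_support_iff.2 (left_ne_zero_of_mul hcoeff), Finsupp.mem_support_iff.2 hv⟩
    have hn : ∀ v, n v ≠ 0 → v ∉ U := fun v hv => hq.notMem_of_mem_left <|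
      (mem_vars_iff_mem_support v).2
        ⟨n, mem_support_iff.2 (right_ne_zero_of_mul hcoeff), Finsupp.mem_support_iff.2 hv⟩
    apply hne
    rw [← Finset.HasAntidiagonal.mem_antidiagonal.1 hmn, Finsupp.filter_add, Finsupp.filter_add,
      (Finsupp.filter_eq_self_iff _ m).2 hm, (Finsupp.filter_eq_self_iff _ n).2 hn,
      (Finsupp.filter_eq_zero_iff _ m).2 fun v hv => not_not.1 fun h => hv (hm v h),
      (Finsupp.filter_eq_zero_iff _ n).2 fun v hv => not_not.1 fun h => hn v h hv,
      add_zero, zero_add]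
  · exact fun h => absurd
      (Finset.HasAntidiagonal.mem_antidiagonal.2 (Finsupp.filter_add_filter_not d _)) h

theorem exists_mem_support_mul_eqOn [NoZeroDivisors R] {p q : MvPolynomial σ R} {U : Set σ}
    (hp : ↑p.vars ⊆ U) (hq : Disjoint ↑q.vars U) {m m' : σ →₀ ℕ}
    (hm : m ∈ (p * q).support) (hm' : m' ∈ (p * q).support) :
    ∃ m'' ∈ (p * q).support, Set.EqOn m'' m U ∧ Set.EqOn m'' m' Uᶜ := by
  classical
  refine ⟨m.filter (· ∈ U) + m'.filter (· ∉ U), ?_, fun v hv => ?_, fun v hv => ?_⟩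
  · rw [mem_support_iff, coeff_mul_of_vars_subset hp hq] at hm hm' ⊢
    have hU : (m.filter (· ∈ U) + m'.filter (· ∉ U)).filter (· ∈ U) = m.filter (· ∈ U) := by
      ext v; by_cases hv : v ∈ U <;> simp [hv]
    have hU' : (m.filter (· ∈ U) + m'.filter (· ∉ U)).filter (· ∉ U) = m'.filter (· ∉ U) := by
      ext v; by_cases hv : v ∈ U <;> simp [hv]
    rw [hU, hU']
    exact mul_ne_zero (left_ne_zero_of_mul hm) (right_ne_zero_of_mul hm')
  · simp [hv]
  · simp [Set.notMem_of_mem_compl hv]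

theorem disjoint_vars_of_degreeOf_mul_le_one [NoZeroDivisors R] {p q : MvPolynomial σ R}
    (hp : p ≠ 0) (hq : q ≠ 0) (hdeg : ∀ v, degreeOf v (p * q) ≤ 1) :
    Disjoint p.vars q.vars := by
  refine Finset.disjoint_left.2 fun v hvp hvq => ?_
  have hv := hdeg v
  rw [mem_vars_iff_degreeOf_ne_zero] at hvp hvq
  rw [degreeOf_mul_eq hp hq] at hv
  lia

theorem vars_subset_vars_mul [NoZeroDivisors R] {p q : MvPolynomial σ R} (hp : p ≠ 0)
    (hq : q ≠ 0) : p.vars ⊆ (p * q).vars := by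
  intro v hv
  rw [mem_vars_iff_degreeOf_ne_zero] at hv ⊢
  rw [degreeOf_mul_eq hp hq]
  lia

theorem isUnit_of_vars_eq_empty_of_isUnit_coeff_mul {p q : MvPolynomial σ R} (hq : q.vars = ∅)
    {d : σ →₀ ℕ} (hd : IsUnit (coeff d (p * q))) : IsUnit q := by
  rw [vars_eq_empty_iff_eq_C] at hq
  rw [hq, mul_comm, coeff_C_mul] at hd
  exact hq ▸ (isUnit_of_mul_isUnit_left hd).map C

theorem irreducible_of_degreeOf_le_one {R : Type*} [CommRing R] [IsDomain R]
    {P : MvPolynomial σ R}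
    (hdeg : ∀ v, degreeOf v P ≤ 1) (hvars : P.vars.Nonempty)
    {d : σ →₀ ℕ} (hd : IsUnit (coeff d P))
    (hsplit : ∀ U : Set σ,
      (∀ m ∈ P.support, ∀ m' ∈ P.support,
        ∃ m'' ∈ P.support, Set.EqOn m'' m U ∧ Set.EqOn m'' m' Uᶜ) →
        ↑P.vars ⊆ U ∨ Disjoint ↑P.vars U) :
    Irreducible P := by
  refine ⟨fun hunit => ?_, ?_⟩
  · obtain ⟨r, -, rfl⟩ := isUnit_iff_eq_C_of_isReduced.1 hunit
    simp at hvars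
  rintro p q rfl
  have hpq : p * q ≠ 0 := fun h => hd.ne_zero (by rw [h, coeff_zero])
  have hp := left_ne_zero_of_mul hpq
  have hq := right_ne_zero_of_mul hpq
  have hdisj : Disjoint q.vars p.vars := (disjoint_vars_of_degreeOf_mul_le_one hp hq hdeg).symm
  have hp_vars : p.vars ⊆ (p * q).vars := vars_subset_vars_mul hp hq
  have hq_vars : q.vars ⊆ (p * q).vars := by
    rw [mul_comm]; exact vars_subset_vars_mul hq hp
  have hcases := hsplit p.vars fun m hm m' hm' =>
    exists_mem_support_mul_eqOn subset_rfl (Finset.disjoint_coe.2 hdisj) hm hm'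
  rw [Finset.coe_subset, Finset.disjoint_coe] at hcases
  rcases hcases with hpq_sub | hpq_disj
  · have hq_empty := Finset.disjoint_self_iff_empty _ |>.1
      (hdisj.mono_right (hq_vars.trans hpq_sub))
    exact .inr (isUnit_of_vars_eq_empty_of_isUnit_coeff_mul hq_empty hd)
  · have hp_empty := Finset.disjoint_self_iff_empty _ |>.1 (hpq_disj.mono_left hp_vars)
    rw [mul_comm] at hd
    exact .inl (isUnit_of_vars_eq_empty_of_isUnit_coeff_mul hp_empty hd)

theorem coeff_sum_monomial_one [DecidableEq σ] {ι : Type*} {S : Finset ι} {f : ι → σ →₀ ℕ}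
    (hf : Set.InjOn f S) (d : σ →₀ ℕ) :
    coeff d (∑ i ∈ S, monomial (f i) (1 : R)) = if d ∈ S.image f then 1 else 0 := by
  rw [← Finset.sum_image (f := fun d => monomial d (1 : R)) hf, coeff_sum]
  simp only [coeff_monomial, Finset.sum_ite_eq']

theorem prod_map_X_eq_monomial [DecidableEq σ] (L : List σ) :
    (L.map X).prod = monomial (Multiset.toFinsupp (L : Multiset σ)) (1 : R) := by
  induction L with
  | nil => simp
  | cons v L ih =>
    rw [List.map_cons, List.prod_cons, ih, X, monomial_mul, one_mul, ← Multiset.cons_coe,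
      ← Multiset.singleton_add, Multiset.toFinsupp_add, Multiset.toFinsupp_singleton]

end MultiaffinePolynomials

section Arcs

variable {α : Type*} {l l' : List α} {a b x y : α}

/-- The consecutive pairs of a list: when the list is a path, the arcs it traverses. They index the
coding variables in `pathMonomial`. -/
def arcs (l : List α) : List (α × α) := l.zip l.tail

theorem mem_arcs_iff : (x, y) ∈ arcs l ↔ ∃ i, l[i]? = some x ∧ l[i + 1]? = some y := by
  simp only [arcs, List.mem_iff_getElem?, List.getElem?_zip_eq_some, List.getElem?_tail]

theorem mem_arcs_iff_getElem?_succ (hl : l.Nodup) {i : ℕ} (hx : l[i]? = some x) :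
    (x, y) ∈ arcs l ↔ l[i + 1]? = some y := by
  refine mem_arcs_iff.trans ⟨?_, fun hy => ⟨i, hx, hy⟩⟩
  rintro ⟨j, hxj, hy⟩
  have hij : i = j :=
    (List.getElem?_inj (List.getElem?_eq_some_iff.1 hx).1 hl).1 (hx.trans hxj.symm)
  rwa [hij]

theorem nodup_arcs (hl : l.Nodup) : (arcs l).Nodup := by
  refine List.Nodup.of_map Prod.snd ?_
  rw [arcs, List.map_snd_zip (by simp)]
  exact hl.tail

theorem eq_of_mem_arcs_iff (hl : l.Nodup) (hl' : l'.Nodup) (hhead : l.head? = l'.head?)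
    (harcs : ∀ v, v ∈ arcs l ↔ v ∈ arcs l') : l = l' := by
  refine List.ext_getElem? fun i => ?_
  induction i with
  | zero => simpa only [List.head?_eq_getElem?] using hhead
  | succ i ih =>
    cases hx : l[i]? with
    | none =>
      rw [List.getElem?_eq_none, List.getElem?_eq_none]
      · exact (List.getElem?_eq_none_iff.1 (ih ▸ hx)).trans i.le_succ
      · exact (List.getElem?_eq_none_iff.1 hx).trans i.le_succ
    | some x =>
      ext y
      rw [← mem_arcs_iff_getElem?_succ hl hx, harcs, mem_arcs_iff_getElem?_succ hl' (ih ▸ hx)]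

theorem exists_getElem?_succ_of_ne_getLast {i : ℕ} (hlast : l.getLast? = some b)
    (hx : l[i]? = some x) (hxb : x ≠ b) : ∃ y, l[i + 1]? = some y := by
  rw [List.getLast?_eq_getElem?] at hlast
  grind

theorem mem_of_mem_arcs_left (h : (x, y) ∈ arcs l) : x ∈ l :=
  (List.of_mem_zip h).1

theorem mem_of_mem_arcs_right (h : (x, y) ∈ arcs l) : y ∈ l :=
  List.mem_of_mem_tail (List.of_mem_zip h).2

theorem exists_mem_arcs_of_ne_getLast (hlast : l.getLast? = some b) (hx : x ∈ l) (hxb : x ≠ b) :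
    ∃ y, (x, y) ∈ arcs l := by
  obtain ⟨i, hi⟩ := List.mem_iff_getElem?.1 hx
  obtain ⟨y, hy⟩ := exists_getElem?_succ_of_ne_getLast hlast hi hxb
  exact ⟨y, mem_arcs_iff.2 ⟨i, hi, hy⟩⟩

theorem ne_head_of_mem_arcs (hl : l.Nodup) (hhead : l.head? = some a) (h : (x, y) ∈ arcs l) :
    y ≠ a := by
  obtain ⟨t, rfl⟩ := List.head?_eq_some_iff.1 hhead
  rintro rfl
  exact (List.nodup_cons.1 hl).1 (List.of_mem_zip h).2

theorem ne_getLast_of_mem_arcs (hl : l.Nodup) (hlast : l.getLast? = some b)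
    (h : (x, y) ∈ arcs l) : x ≠ b := by
  rintro rfl
  rw [List.getLast?_eq_getElem?] at hlast
  rw [mem_arcs_iff_getElem?_succ hl hlast, List.getElem?_eq_none (by lia)] at h
  cases h

theorem snd_unique_of_mem_arcs {z : α} (hl : l.Nodup) (hy : (x, y) ∈ arcs l)
    (hz : (x, z) ∈ arcs l) : y = z := by
  obtain ⟨i, hx, hi⟩ := mem_arcs_iff.1 hy
  rw [mem_arcs_iff_getElem?_succ hl hx, hi] at hz
  exact Option.some.inj hz

end Arcs

/-- A finite family of lists without repetition from `a` to `b`: an abstraction of a set of paths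
in an acyclic graph, where only the endpoints and simplicity matter. -/
structure IsSimplePathFamily {α : Type*} (S : Finset (List α)) (a b : α) : Prop where
  nodup : ∀ l ∈ S, l.Nodup
  head? : ∀ l ∈ S, l.head? = some a
  getLast? : ∀ l ∈ S, l.getLast? = some b

/-- `S` is closed under switching along the set `U` of arcs: the arcs in `U` of one member and the
arcs outside `U` of another one always make up a third member. A factorization of the polynomial
of `S` yields such a `U`, the variables of one factor. -/
def IsSwitchClosed {α : Type*} (S : Finset (List α)) (U : Set (α × α)) : Prop :=
  ∀ l ∈ S, ∀ l' ∈ S, ∃ l'' ∈ S,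
    (∀ v ∈ U, v ∈ arcs l'' ↔ v ∈ arcs l) ∧ ∀ v ∉ U, v ∈ arcs l'' ↔ v ∈ arcs l'

section Switching

variable {α : Type*} {S : Finset (List α)} {U : Set (α × α)} {l l' : List α} {a b x y z : α}

theorem IsSwitchClosed.compl (hU : IsSwitchClosed S U) : IsSwitchClosed S Uᶜ := by
  intro l hl l' hl'
  obtain ⟨l'', hl'', hin, hout⟩ := hU l' hl' l hl
  exact ⟨l'', hl'', hout, fun v hv => hin v (Set.notMem_compl_iff.1 hv)⟩

theorem IsSwitchClosed.mem_of_fst_eq (hS : ∀ l ∈ S, l.Nodup) (hU : IsSwitchClosed S U)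
    (hl : l ∈ S) (hl' : l' ∈ S) (hy : (x, y) ∈ arcs l) (hz : (x, z) ∈ arcs l')
    (hyU : (x, y) ∈ U) : (x, z) ∈ U := by
  by_contra hzU
  obtain ⟨l'', hl'', hin, hout⟩ := hU l hl l' hl'
  have hyz : y = z :=
    snd_unique_of_mem_arcs (hS l'' hl'') ((hin _ hyU).2 hy) ((hout _ hzU).2 hz)
  exact hzU (hyz ▸ hyU)

theorem IsSwitchClosed.mem_of_snd_eq_fst (hS : IsSimplePathFamily S a b)
    (hcommon : ∀ c, (∀ l ∈ S, c ∈ l) → c = a ∨ c = b) (hU : IsSwitchClosed S U)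
    (hl : l ∈ S) (hxy : (x, y) ∈ arcs l) (hyz : (y, z) ∈ arcs l) (hxyU : (x, y) ∈ U) :
    (y, z) ∈ U := by
  -- Otherwise take `l'` in `S` avoiding `y` and switch from `l` to `l'` outside `U`: the result
  -- enters `y` along `l` but can leave `y` only along `l'`.
  by_contra hyzU
  have hya : y ≠ a := ne_head_of_mem_arcs (hS.nodup l hl) (hS.head? l hl) hxy
  have hyb : y ≠ b := ne_getLast_of_mem_arcs (hS.nodup l hl) (hS.getLast? l hl) hyz
  obtain ⟨l', hl', hyl'⟩ : ∃ l' ∈ S, y ∉ l' := by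
    by_contra! hall
    exact (hcommon y hall).elim hya hyb
  obtain ⟨l'', hl'', hin, hout⟩ := hU l hl l' hl'
  have hyl'' : y ∈ l'' := mem_of_mem_arcs_right ((hin _ hxyU).2 hxy)
  obtain ⟨w, hyw⟩ := exists_mem_arcs_of_ne_getLast (hS.getLast? l'' hl'') hyl'' hyb
  have hywU : (y, w) ∉ U := fun hywU => hyzU (hU.mem_of_fst_eq hS.nodup hl'' hl hyw hyz hywU)
  exact hyl' (mem_of_mem_arcs_left ((hout _ hywU).1 hyw))

theorem IsSwitchClosed.arcs_subset_of_mem (hS : IsSimplePathFamily S a b)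
    (hcommon : ∀ c, (∀ l ∈ S, c ∈ l) → c = a ∨ c = b) (hU : IsSwitchClosed S U)
    (hl : l ∈ S) (hay : (a, y) ∈ arcs l) (hayU : (a, y) ∈ U) (hl' : l' ∈ S) :
    ∀ v ∈ arcs l', v ∈ U := by
  rintro ⟨x, z⟩ hxz
  obtain ⟨i, hx, hz⟩ := mem_arcs_iff.1 hxz
  clear hxz
  induction i generalizing x z with
  | zero =>
    have hxa : x = a := by
      rw [← List.head?_eq_getElem?, hS.head? l' hl'] at hx
      exact (Option.some.inj hx).symm
    subst hxa
    exact hU.mem_of_fst_eq hS.nodup hl hl' hay (mem_arcs_iff.2 ⟨0, hx, hz⟩) hayU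
  | succ i ih =>
    obtain ⟨w, hw⟩ : ∃ w, l'[i]? = some w :=
      ⟨_, List.getElem?_eq_getElem (by have := (List.getElem?_eq_some_iff.1 hx).1; lia)⟩
    exact hU.mem_of_snd_eq_fst hS hcommon hl' (mem_arcs_iff.2 ⟨i, hw, hx⟩)
      (mem_arcs_iff.2 ⟨i + 1, hx, hz⟩) (ih w x hw hx)

theorem IsSwitchClosed.arcs_subset_or_disjoint (hS : IsSimplePathFamily S a b)
    (hcommon : ∀ c, (∀ l ∈ S, c ∈ l) → c = a ∨ c = b) (hab : a ≠ b) (hU : IsSwitchClosed S U) :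
    (∀ l ∈ S, ∀ v ∈ arcs l, v ∈ U) ∨ ∀ l ∈ S, ∀ v ∈ arcs l, v ∉ U := by
  by_cases hfirst : ∃ l ∈ S, ∃ y, (a, y) ∈ arcs l ∧ (a, y) ∈ U
  · obtain ⟨l, hl, y, hay, hayU⟩ := hfirst
    exact .inl fun l' hl' => hU.arcs_subset_of_mem hS hcommon hl hay hayU hl'
  · right
    intro l hl
    obtain ⟨y, hay⟩ := exists_mem_arcs_of_ne_getLast (hS.getLast? l hl)
      (List.mem_of_head? (hS.head? l hl)) hab
    have hayU : (a, y) ∈ Uᶜ := fun hayU => hfirst ⟨l, hl, y, hay, hayU⟩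
    exact hU.compl.arcs_subset_of_mem hS hcommon hl hay hayU hl

end Switching

section PathPolynomial

open MvPolynomial

variable {α F : Type*} [Field F] {S : Finset (List α)} {a b : α}

/-- The exponent vector of `pathMonomial F l`: each arc is counted as often as `l` traverses it. -/
noncomputable def arcExponent [DecidableEq α] (l : List α) : α × α →₀ ℕ :=
  Multiset.toFinsupp (arcs l : Multiset (α × α))

theorem arcExponent_ne_zero_iff [DecidableEq α] {l : List α} {v : α × α} :
    arcExponent l v ≠ 0 ↔ v ∈ arcs l := by
  rw [arcExponent, Multiset.toFinsupp_apply, Multiset.count_ne_zero, Multiset.mem_coe]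

theorem pathMonomial_eq_monomial [DecidableEq α] (l : List α) :
    pathMonomial F l = monomial (arcExponent l) 1 :=
  prod_map_X_eq_monomial (arcs l)

theorem injOn_arcExponent [DecidableEq α] (hS : IsSimplePathFamily S a b) :
    Set.InjOn arcExponent (S : Set (List α)) := by
  intro l hl l' hl' heq
  refine eq_of_mem_arcs_iff (hS.nodup l hl) (hS.nodup l' hl')
    ((hS.head? l hl).trans (hS.head? l' hl').symm) fun v => ?_
  rw [← arcExponent_ne_zero_iff, heq, arcExponent_ne_zero_iff]

theorem coeff_sum_pathMonomial [DecidableEq α] (hS : IsSimplePathFamily S a b) (d : α × α →₀ ℕ) :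
    coeff d (∑ l ∈ S, pathMonomial F l) =
      if d ∈ S.image arcExponent then 1 else 0 := by
  simp only [pathMonomial_eq_monomial]
  exact coeff_sum_monomial_one (injOn_arcExponent hS) d

theorem mem_support_sum_pathMonomial [DecidableEq α] (hS : IsSimplePathFamily S a b)
    {d : α × α →₀ ℕ} :
    d ∈ (∑ l ∈ S, pathMonomial F l).support ↔
      ∃ l ∈ S, arcExponent l = d := by
  rw [mem_support_iff, coeff_sum_pathMonomial hS, ite_ne_right_iff, Finset.mem_image]
  exact and_iff_left one_ne_zero

theorem mem_vars_sum_pathMonomial (hS : IsSimplePathFamily S a b) {v : α × α} :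
    v ∈ (∑ l ∈ S, pathMonomial F l).vars ↔ ∃ l ∈ S, v ∈ arcs l := by
  classical
  simp only [mem_vars_iff_mem_support, mem_support_sum_pathMonomial hS, exists_exists_and_eq_and,
    Finsupp.mem_support_iff, arcExponent_ne_zero_iff]

theorem degreeOf_sum_pathMonomial_le_one (hS : IsSimplePathFamily S a b) (v : α × α) :
    degreeOf v (∑ l ∈ S, pathMonomial F l) ≤ 1 := by
  classical
  refine degreeOf_le_iff.2 fun d hd => ?_
  obtain ⟨l, hl, rfl⟩ := (mem_support_sum_pathMonomial hS).1 hd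
  exact Multiset.nodup_iff_count_le_one.1 (Multiset.coe_nodup.2 (nodup_arcs (hS.nodup l hl))) v

theorem isSwitchClosed_of_support_sum_pathMonomial (hS : IsSimplePathFamily S a b) {U : Set (α × α)}
    (hU : ∀ m ∈ (∑ l ∈ S, pathMonomial F l).support, ∀ m' ∈ (∑ l ∈ S, pathMonomial F l).support,
      ∃ m'' ∈ (∑ l ∈ S, pathMonomial F l).support, Set.EqOn m'' m U ∧ Set.EqOn m'' m' Uᶜ) :
    IsSwitchClosed S U := by
  classical
  intro l hl l' hl'
  obtain ⟨_, hm'', hin, hout⟩ := hU _ ((mem_support_sum_pathMonomial hS).2 ⟨l, hl, rfl⟩)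
    _ ((mem_support_sum_pathMonomial hS).2 ⟨l', hl', rfl⟩)
  obtain ⟨l'', hl'', rfl⟩ := (mem_support_sum_pathMonomial hS).1 hm''
  refine ⟨l'', hl'', fun v hv => ?_, fun v hv => ?_⟩
  · rw [← arcExponent_ne_zero_iff, hin hv, arcExponent_ne_zero_iff]
  · rw [← arcExponent_ne_zero_iff, hout hv, arcExponent_ne_zero_iff]

theorem irreducible_sum_pathMonomial (hS : IsSimplePathFamily S a b) (hne : S.Nonempty)
    (hab : a ≠ b) (hcommon : ∀ c, (∀ l ∈ S, c ∈ l) → c = a ∨ c = b) :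
    Irreducible (∑ l ∈ S, pathMonomial F l) := by
  classical
  obtain ⟨l, hl⟩ := hne
  obtain ⟨y, hay⟩ := exists_mem_arcs_of_ne_getLast (hS.getLast? l hl)
    (List.mem_of_head? (hS.head? l hl)) hab
  have hcoeff : IsUnit (coeff (arcExponent l)
      (∑ l ∈ S, pathMonomial F l)) := by
    rw [coeff_sum_pathMonomial hS, if_pos (Finset.mem_image_of_mem _ hl)]
    exact isUnit_one
  refine irreducible_of_degreeOf_le_one (degreeOf_sum_pathMonomial_le_one hS)
    ⟨(a, y), (mem_vars_sum_pathMonomial hS).2 ⟨l, hl, hay⟩⟩ hcoeff fun U hU => ?_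
  have hswitch : IsSwitchClosed S U := isSwitchClosed_of_support_sum_pathMonomial hS hU
  refine (hswitch.arcs_subset_or_disjoint hS hcommon hab).imp (fun h v hv => ?_) fun h => ?_
  · obtain ⟨l', hl', hv'⟩ := (mem_vars_sum_pathMonomial hS).1 hv
    exact h l' hl' v hv'
  · refine Set.disjoint_left.2 fun v hv => ?_
    obtain ⟨l', hl', hv'⟩ := (mem_vars_sum_pathMonomial hS).1 hv
    exact h l' hl' v hv'

end PathPolynomial

section RelationPaths

variable {α : Type*} {r : α → α → Prop} {a b c d x y : α} {l s t : List α}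

/-- `l` is a path from `a` to `b` along the relation `r`. For `r = EdgeAdj src dst` this is
`IsEdgePath src dst`; only the adjacency relation of the edges matters. -/
def IsRelPath (r : α → α → Prop) (a b : α) (l : List α) : Prop :=
  l.IsChain r ∧ l.head? = some a ∧ l.getLast? = some b

theorem isRelPath_append_cons :
    IsRelPath r a b (s ++ c :: t) ↔ IsRelPath r a c (s ++ [c]) ∧ IsRelPath r c b (c :: t) := by
  have hhead : (s ++ c :: t).head? = (s ++ [c]).head? := by cases s <;> rfl
  have hlast : (s ++ c :: t).getLast? = (c :: t).getLast? := List.getLast?_append_cons s c t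
  rw [IsRelPath, IsRelPath, IsRelPath, hhead, hlast, List.isChain_split, List.getLast?_concat,
    List.head?_cons]
  tauto

theorem IsRelPath.exists_split (h : IsRelPath r a b l) (hc : c ∈ l) : ∃ s t, l = s ++ c :: t ∧
    IsRelPath r a c (s ++ [c]) ∧ IsRelPath r c b (c :: t) := by
  obtain ⟨s, t, rfl⟩ := List.append_of_mem hc
  exact ⟨s, t, rfl, isRelPath_append_cons.1 h⟩

theorem IsRelPath.nodup (hr : ∀ a, ¬ Relation.TransGen r a a) (h : IsRelPath r a b l) :
    l.Nodup := by
  have hchain : l.IsChain (Relation.TransGen r) := h.1.imp fun _ _ => Relation.TransGen.single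
  refine hchain.pairwise.imp ?_
  rintro x _ hxx rfl
  exact hr x hxx

theorem IsRelPath.reflTransGen (h : IsRelPath r a b l) : Relation.ReflTransGen r a b := by
  obtain ⟨hchain, hhead, hlast⟩ := h
  obtain ⟨t, rfl⟩ := List.head?_eq_some_iff.1 hhead
  refine List.relationReflTransGen_of_exists_isChain_cons t hchain ?_
  rwa [List.getLast?_eq_some_getLast (List.cons_ne_nil a t), Option.some_inj] at hlast

theorem exists_isRelPath_cons (h : Relation.ReflTransGen r a b) :
    ∃ t, IsRelPath r a b (a :: t) := by
  obtain ⟨t, hchain, hlast⟩ := List.exists_isChain_cons_of_relationReflTransGen h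
  exact ⟨t, hchain, rfl, List.getLast?_eq_some_getLast (List.cons_ne_nil a t) ▸ congrArg some hlast⟩

theorem isRelPath_self_iff (hr : ∀ a, ¬ Relation.TransGen r a a) :
    IsRelPath r a a l ↔ l = [a] := by
  refine ⟨fun h => ?_, ?_⟩
  · obtain ⟨t, rfl⟩ := List.head?_eq_some_iff.1 h.2.1
    cases t with
    | nil => rfl
    | cons x t =>
      have hmem : a ∈ x :: t := List.mem_of_getLast? h.2.2
      exact absurd hmem (List.nodup_cons.1 (h.nodup hr)).1
  · rintro rfl
    exact ⟨List.isChain_singleton a, rfl, rfl⟩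

/-- `c` is a bottleneck between `a` and `b`: every path from `a` to `b` along `r` visits `c`. Both
`a` and `b` are bottlenecks. -/
def IsBottleneck (r : α → α → Prop) (a b c : α) : Prop :=
  ∀ l, IsRelPath r a b l → c ∈ l

theorem IsBottleneck.reflTransGen_left (hc : IsBottleneck r a b c)
    (hab : Relation.ReflTransGen r a b) : Relation.ReflTransGen r a c := by
  obtain ⟨t, ht⟩ := exists_isRelPath_cons hab
  obtain ⟨_, _, -, hac, -⟩ := ht.exists_split (hc _ ht)
  exact hac.reflTransGen

theorem IsBottleneck.reflTransGen_right (hc : IsBottleneck r a b c)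
    (hab : Relation.ReflTransGen r a b) : Relation.ReflTransGen r c b := by
  obtain ⟨t, ht⟩ := exists_isRelPath_cons hab
  obtain ⟨_, _, -, -, hcb⟩ := ht.exists_split (hc _ ht)
  exact hcb.reflTransGen

theorem IsBottleneck.truncate (hr : ∀ a, ¬ Relation.TransGen r a a)
    (hc : IsBottleneck r a b c) (hcd : Relation.TransGen r c d)
    (hdb : Relation.ReflTransGen r d b) : IsBottleneck r a d c := by
  intro l hl
  obtain ⟨s, rfl⟩ := List.getLast?_eq_some_iff.1 hl.2.2
  obtain ⟨t, ht⟩ := exists_isRelPath_cons hdb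
  rcases List.mem_append.1 (hc _ (isRelPath_append_cons.2 ⟨hl, ht⟩)) with hcs | hct
  · exact List.mem_append_left _ hcs
  · obtain ⟨_, _, -, hdc, -⟩ := ht.exists_split hct
    exact absurd (hcd.trans_left hdc.reflTransGen) (hr c)

theorem IsBottleneck.trans_left (hy : IsBottleneck r a b y) (hc : IsBottleneck r a y c) :
    IsBottleneck r a b c := by
  intro l hl
  obtain ⟨s, t, rfl, hay, -⟩ := hl.exists_split (hy l hl)
  rw [List.append_cons]
  exact List.mem_append_left t (hc _ hay)

theorem IsBottleneck.trans_right (hx : IsBottleneck r a b x) (hc : IsBottleneck r x b c) :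
    IsBottleneck r a b c := by
  intro l hl
  obtain ⟨s, t, rfl, -, hxb⟩ := hl.exists_split (hx l hl)
  exact List.mem_append_right s (hc _ hxb)

/-- `bs 0, …, bs n` are all the bottlenecks between `bs 0` and `bs n`, in topological order. -/
structure IsBottleneckEnumeration (r : α → α → Prop) (n : ℕ) (bs : ℕ → α) : Prop where
  transGen : ∀ i j, i < j → j ≤ n → Relation.TransGen r (bs i) (bs j)
  isBottleneck_iff : ∀ c, IsBottleneck r (bs 0) (bs n) c ↔ ∃ i ≤ n, bs i = c

namespace IsBottleneckEnumeration

variable {n i j : ℕ} {bs : ℕ → α}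

theorem reflTransGen (h : IsBottleneckEnumeration r n bs) (hij : i ≤ j) (hj : j ≤ n) :
    Relation.ReflTransGen r (bs i) (bs j) := by
  rcases hij.eq_or_lt with rfl | hij
  · exact .refl
  · exact (h.transGen i j hij hj).to_reflTransGen

theorem isBottleneck_of_lt (hr : ∀ a, ¬ Relation.TransGen r a a)
    (h : IsBottleneckEnumeration r n bs) (hij : i < j) (hj : j ≤ n) :
    IsBottleneck r (bs 0) (bs j) (bs i) :=
  ((h.isBottleneck_iff _).2 ⟨i, hij.le.trans hj, rfl⟩).truncate hr (h.transGen i j hij hj)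
    (h.reflTransGen hj le_rfl)

theorem le_of_reflTransGen (hr : ∀ a, ¬ Relation.TransGen r a a)
    (h : IsBottleneckEnumeration r n bs) (hi : i ≤ n)
    (hreach : Relation.ReflTransGen r (bs i) (bs j)) : i ≤ j := by
  by_contra! hji
  exact hr _ ((h.transGen j i hji hi).trans_left hreach)

theorem eq_or_eq_of_isBottleneck_succ (hr : ∀ a, ¬ Relation.TransGen r a a)
    (h : IsBottleneckEnumeration r n bs) (hi : i < n)
    (hc : IsBottleneck r (bs i) (bs (i + 1)) c) : c = bs i ∨ c = bs (i + 1) := by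
  have hc_succ : IsBottleneck r (bs 0) (bs (i + 1)) c :=
    (h.isBottleneck_of_lt hr i.lt_succ_self hi).trans_right hc
  have hc_last : IsBottleneck r (bs 0) (bs n) c :=
    ((h.isBottleneck_iff _).2 ⟨i + 1, hi, rfl⟩).trans_left hc_succ
  obtain ⟨j, hj, rfl⟩ := (h.isBottleneck_iff c).1 hc_last
  have hreach := h.reflTransGen i.le_succ hi
  have hij : i ≤ j := h.le_of_reflTransGen hr hi.le (hc.reflTransGen_left hreach)
  have hji : j ≤ i + 1 := h.le_of_reflTransGen hr hj (hc.reflTransGen_right hreach)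
  rcases hij.eq_or_lt with rfl | hij
  · exact .inl rfl
  · exact .inr (congrArg bs (hji.antisymm hij))

end IsBottleneckEnumeration

end RelationPaths

section TransferPolynomial

variable {α F : Type*} [Field F] {r : α → α → Prop} {Paths : α → α → Finset (List α)} {a b c : α}

theorem pathMonomial_append_cons (s t : List α) (c : α) :
    pathMonomial F (s ++ c :: t) = pathMonomial F (s ++ [c]) * pathMonomial F (c :: t) := by
  induction s with
  | nil => simp [pathMonomial]
  | cons x s ih =>
    cases s with
    | nil => simp [pathMonomial]
    | cons y s =>
      simp only [pathMonomial, List.cons_append, List.tail_cons, List.zip_cons_cons, List.map_cons,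
        List.prod_cons, mul_assoc] at ih ⊢
      rw [ih]

theorem transferPoly_self (hr : ∀ a, ¬ Relation.TransGen r a a)
    (hPaths : ∀ a b l, l ∈ Paths a b ↔ IsRelPath r a b l) : transferPoly F Paths a a = 1 := by
  have hself : Paths a a = {[a]} := by
    ext l
    rw [hPaths, isRelPath_self_iff hr, Finset.mem_singleton]
  simp [transferPoly, hself, pathMonomial]

theorem transferPoly_eq_mul_of_isBottleneck (hr : ∀ a, ¬ Relation.TransGen r a a)
    (hPaths : ∀ a b l, l ∈ Paths a b ↔ IsRelPath r a b l) (hc : IsBottleneck r a b c) :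
    transferPoly F Paths a b = transferPoly F Paths a c * transferPoly F Paths c b := by
  rw [transferPoly, transferPoly, transferPoly, Finset.sum_mul_sum, ← Finset.sum_product']
  symm
  have exists_parts {p : List α × List α} (hp : p ∈ Paths a c ×ˢ Paths c b) :
      ∃ s t, p = (s ++ [c], c :: t) ∧ IsRelPath r a b (s ++ c :: t) := by
    obtain ⟨l₁, l₂⟩ := p
    rw [Finset.mem_product, hPaths, hPaths] at hp
    obtain ⟨s, rfl⟩ := List.getLast?_eq_some_iff.1 hp.1.2.2
    obtain ⟨t, rfl⟩ := List.head?_eq_some_iff.1 hp.2.2.1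
    exact ⟨s, t, rfl, isRelPath_append_cons.2 hp⟩
  refine Finset.sum_nbij (fun p => p.1 ++ p.2.tail) (fun p hp => ?_) (fun p hp p' hp' heq => ?_)
    (fun l hl => ?_) (fun p hp => ?_)
  · obtain ⟨s, t, rfl, hst⟩ := exists_parts hp
    rwa [hPaths, List.tail_cons, ← List.append_cons]
  · obtain ⟨s, t, rfl, hst⟩ := exists_parts hp
    obtain ⟨s', t', rfl, -⟩ := exists_parts hp'
    simp only [List.tail_cons, ← List.append_cons] at heq
    have hc_notMem := (List.nodup_cons.1 (List.nodup_middle.1 (hst.nodup hr))).1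
    rw [List.mem_append, not_or] at hc_notMem
    obtain ⟨rfl, -, rfl⟩ := (List.append_cons_inj_of_notMem hc_notMem.1 hc_notMem.2).1 heq
    rfl
  · rw [Finset.mem_coe, hPaths] at hl
    obtain ⟨s, t, rfl, hac, hcb⟩ := hl.exists_split (hc l hl)
    refine ⟨(s ++ [c], c :: t), ?_, (List.append_cons s c t).symm⟩
    rw [Finset.mem_coe, Finset.mem_product, hPaths, hPaths]
    exact ⟨hac, hcb⟩
  · obtain ⟨s, t, rfl, -⟩ := exists_parts hp
    simp only [List.tail_cons, ← List.append_cons]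
    exact (pathMonomial_append_cons s t c).symm

theorem irreducible_transferPoly (hr : ∀ a, ¬ Relation.TransGen r a a)
    (hPaths : ∀ a b l, l ∈ Paths a b ↔ IsRelPath r a b l) (hab : Relation.TransGen r a b)
    (hbot : ∀ c, IsBottleneck r a b c → c = a ∨ c = b) :
    Irreducible (transferPoly F Paths a b) := by
  have hS : IsSimplePathFamily (Paths a b) a b :=
    ⟨fun l hl => ((hPaths a b l).1 hl).nodup hr, fun l hl => ((hPaths a b l).1 hl).2.1,
      fun l hl => ((hPaths a b l).1 hl).2.2⟩
  have hne : (Paths a b).Nonempty := by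
    obtain ⟨t, ht⟩ := exists_isRelPath_cons hab.to_reflTransGen
    exact ⟨a :: t, (hPaths a b _).2 ht⟩
  have hab_ne : a ≠ b := by
    rintro rfl
    exact hr a hab
  exact irreducible_sum_pathMonomial hS hne hab_ne fun c hc =>
    hbot c fun l hl => hc l ((hPaths a b l).2 hl)

theorem IsBottleneckEnumeration.transferPoly_eq_prod {n : ℕ} {bs : ℕ → α}
    (hr : ∀ a, ¬ Relation.TransGen r a a)
    (hPaths : ∀ a b l, l ∈ Paths a b ↔ IsRelPath r a b l)
    (h : IsBottleneckEnumeration r n bs) {j : ℕ} (hj : j ≤ n) :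
    transferPoly F Paths (bs 0) (bs j) =
      ∏ i ∈ Finset.range j, transferPoly F Paths (bs i) (bs (i + 1)) := by
  induction j with
  | zero => rw [transferPoly_self hr hPaths, Finset.prod_range_zero]
  | succ j ih =>
    rw [Finset.prod_range_succ, ← ih (Nat.le_of_succ_le hj)]
    exact transferPoly_eq_mul_of_isBottleneck hr hPaths
      (h.isBottleneck_of_lt hr j.lt_succ_self hj)

end TransferPolynomial

theorem transfer_factorization_along_bottlenecks_general
    {α F : Type*} [Field F] {r : α → α → Prop} (hr : ∀ a, ¬ Relation.TransGen r a a)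
    {Paths : α → α → Finset (List α)} (hPaths : ∀ a b l, l ∈ Paths a b ↔ IsRelPath r a b l)
    {n : ℕ} {bs : ℕ → α} (h : IsBottleneckEnumeration r n bs) :
    transferPoly F Paths (bs 0) (bs n) =
        ∏ i ∈ Finset.range n, transferPoly F Paths (bs i) (bs (i + 1)) ∧
      ∀ i < n, Irreducible (transferPoly F Paths (bs i) (bs (i + 1))) :=
  ⟨h.transferPoly_eq_prod hr hPaths le_rfl, fun i hi =>
    irreducible_transferPoly hr hPaths (h.transGen i (i + 1) i.lt_succ_self hi)
      fun _ => h.eq_or_eq_of_isBottleneck_succ hr hi⟩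

/-- Let `e, e'` be edges of a finite DAG with `e'` reachable from `e`,
and let `e = bs 0, bs 1, …, bs (k-1) = e'` be the bottlenecks between `e` and `e'`
(edges lying on every directed path from `e` to `e'`) listed in topological order. Then
`m_{ee'} = Π_{i=0}^{k-2} m_{bs i, bs (i+1)}`, and each factor is irreducible. -/
theorem transfer_factorization_along_bottlenecks
    {V E F : Type*} [Fintype E] [Field F] (src dst : E → V)
    (hacyc : ∀ e : E, ¬ Relation.TransGen (EdgeAdj src dst) e e)
    (Paths : E → E → Finset (List E))
    (hPaths : ∀ a b l, l ∈ Paths a b ↔ IsEdgePath src dst a b l)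
    (e e' : E) (hreach : (Paths e e').Nonempty)
    (k : ℕ) (hk : 2 ≤ k) (bs : ℕ → E)
    (h0 : bs 0 = e) (hlastb : bs (k - 1) = e')
    (hord : ∀ i j, i < j → j < k → Relation.TransGen (EdgeAdj src dst) (bs i) (bs j))
    (hbot : ∀ c : E, (∀ l ∈ Paths e e', c ∈ l) ↔ ∃ i < k, bs i = c) :
    transferPoly F Paths e e' =
        ∏ i ∈ Finset.range (k - 1), transferPoly F Paths (bs i) (bs (i + 1)) ∧
      ∀ i < k - 1, Irreducible (transferPoly F Paths (bs i) (bs (i + 1))) := by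
  subst h0 hlastb
  obtain ⟨n, rfl⟩ : ∃ n, k = n + 1 := ⟨k - 1, by lia⟩
  simp only [hPaths, Nat.lt_succ_iff, Nat.add_sub_cancel] at hbot hord ⊢
  exact transfer_factorization_along_bottlenecks_general hacyc hPaths ⟨hord, hbot⟩
end
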